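/- Let π = s_i s_j be a product of two simple transpositions with i, j such that ℓ(π) = 2. Then the Schubert polynomial 𝔖_π is the sum of the monomials x_{r_1} x_{r_2} over the compatible sequences (𝐚,𝐫) of π, i.e. 𝔖_π = Σ over compatible sequences (𝐚,𝐫) of π of x_{r_1} x_{r_2}. -/

import Mathlib

open MvPolynomial Classical

/-- The action of the simple transposition `s_i` on polynomials, swapping `x_i` and `x_{i+1}`
(variables are 0-indexed: `X i` stands for `x_{i+1}`). -/
noncomputable def swapPoly (i : ℕ) (f : MvPolynomial ℕ ℤ) : MvPolynomial ℕ ℤ :=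
  rename (Equiv.swap i (i + 1)) f

/-- The divided difference operator `∂_i f = (f - s_i f)/(x_i - x_{i+1})`. -/
noncomputable def dd (i : ℕ) (f : MvPolynomial ℕ ℤ) : MvPolynomial ℕ ℤ :=
  if h : (X i - X (i + 1)) ∣ (f - swapPoly i f) then h.choose else 0

/-- Coxeter length of a permutation of `Fin n`, as the number of inversions. -/
def lenF (n : ℕ) (π : Equiv.Perm (Fin n)) : ℕ :=
  (Finset.univ.filter fun p : Fin n × Fin n => p.1 < p.2 ∧ π p.2 < π p.1).card

/-- The simple transposition `s_{i+1}` of `S_n` (0-indexed: swaps positions `i` and `i+1`),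
junk value `1` if out of range. -/
def sFin (n i : ℕ) : Equiv.Perm (Fin n) :=
  if h : i + 1 < n then Equiv.swap ⟨i, by omega⟩ ⟨i + 1, h⟩ else 1

/-- `S` is the family of Schubert polynomials of `S_n`: `S w₀ = x_1^{n-1} ⋯ x_{n-1}` for the
longest element `w₀`, and `S π = ∂_i S_{π s_i}` whenever `ℓ(π) < ℓ(π s_i)`. -/
def SchubertProp (n : ℕ) (S : Equiv.Perm (Fin n) → MvPolynomial ℕ ℤ) : Prop :=
  S Fin.revPerm = (∏ i ∈ Finset.range n, X i ^ (n - 1 - i)) ∧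
  ∀ (π : Equiv.Perm (Fin n)) (i : ℕ), i + 1 < n →
    lenF n π < lenF n (π * sFin n i) → S π = dd i (S (π * sFin n i))

/-- `p = ((a₁, a₂), (r₁, r₂))` is a compatible sequence of `π`, for `π` of length 2. -/
def CompatPair (n : ℕ) (π : Equiv.Perm (Fin n)) (p : (ℕ × ℕ) × ℕ × ℕ) : Prop :=
  p.1.1 + 1 < n ∧ p.1.2 + 1 < n ∧ sFin n p.1.1 * sFin n p.1.2 = π ∧
  p.2.1 ≤ p.2.2 ∧ p.2.1 ≤ p.1.1 ∧ p.2.2 ≤ p.1.2 ∧ (p.1.1 < p.1.2 → p.2.1 < p.2.2)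

/-! ### Swaps and divided differences -/

theorem swapPoly_add (k : ℕ) (f g : MvPolynomial ℕ ℤ) :
    swapPoly k (f + g) = swapPoly k f + swapPoly k g := by simp [swapPoly]

theorem swapPoly_sub (k : ℕ) (f g : MvPolynomial ℕ ℤ) :
    swapPoly k (f - g) = swapPoly k f - swapPoly k g := by simp [swapPoly]

theorem swapPoly_mul (k : ℕ) (f g : MvPolynomial ℕ ℤ) :
    swapPoly k (f * g) = swapPoly k f * swapPoly k g := by simp [swapPoly]

theorem swapPoly_pow (k : ℕ) (f : MvPolynomial ℕ ℤ) (m : ℕ) :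
    swapPoly k (f ^ m) = swapPoly k f ^ m := by simp [swapPoly]

theorem swapPoly_C (k : ℕ) (a : ℤ) : swapPoly k (C a) = C a := by simp [swapPoly]

theorem swapPoly_two (k : ℕ) : swapPoly k 2 = 2 := by
  unfold swapPoly; exact map_ofNat _ 2

theorem swapPoly_X (k l : ℕ) : swapPoly k (X l) = X (Equiv.swap k (k + 1) l) := by
  simp [swapPoly]

theorem swapPoly_X_left (k : ℕ) : swapPoly k (X k) = X (k + 1) := by
  simp [swapPoly]

theorem swapPoly_X_right (k : ℕ) : swapPoly k (X (k + 1)) = X k := by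
  simp [swapPoly]

theorem swapPoly_X_ne (k l : ℕ) (h1 : l ≠ k) (h2 : l ≠ k + 1) : swapPoly k (X l) = X l := by
  rw [swapPoly_X, Equiv.swap_apply_of_ne_of_ne h1 h2]

theorem swapPoly_swapPoly (k : ℕ) (f : MvPolynomial ℕ ℤ) : swapPoly k (swapPoly k f) = f := by
  unfold swapPoly
  rw [rename_rename]
  have : (⇑(Equiv.swap k (k + 1)) ∘ ⇑(Equiv.swap k (k + 1))) = id := by
    funext x; simp
  rw [this, rename_id_apply]

theorem D_ne (k : ℕ) : (X k - X (k + 1) : MvPolynomial ℕ ℤ) ≠ 0 := by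
  intro h
  have := X_injective (sub_eq_zero.mp h)
  omega

theorem D_dvd (k : ℕ) (f : MvPolynomial ℕ ℤ) :
    (X k - X (k + 1) : MvPolynomial ℕ ℤ) ∣ f - swapPoly k f := by
  induction f using MvPolynomial.induction_on with
  | C a => rw [swapPoly_C, sub_self]; exact dvd_zero _
  | add p q hp hq =>
    rw [swapPoly_add]
    have : p + q - (swapPoly k p + swapPoly k q) = (p - swapPoly k p) + (q - swapPoly k q) := by
      ring
    rw [this]
    exact dvd_add hp hq
  | mul_X p l hp =>
    rw [swapPoly_mul]
    have hX : (X k - X (k + 1) : MvPolynomial ℕ ℤ) ∣ X l - swapPoly k (X l) := by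
      by_cases h1 : l = k
      · subst h1; rw [swapPoly_X_left]
      by_cases h2 : l = k + 1
      · subst h2; rw [swapPoly_X_right]; exact ⟨-1, by ring⟩
      rw [swapPoly_X_ne _ _ h1 h2]; simp
    have : p * X l - swapPoly k p * swapPoly k (X l)
        = (p - swapPoly k p) * X l + swapPoly k p * (X l - swapPoly k (X l)) := by ring
    rw [this]
    exact dvd_add (Dvd.dvd.mul_right hp _) (Dvd.dvd.mul_left hX _)

theorem dd_spec (k : ℕ) (f : MvPolynomial ℕ ℤ) :
    f - swapPoly k f = (X k - X (k + 1)) * dd k f := by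
  have h := D_dvd k f
  unfold dd
  rw [dif_pos h]
  exact h.choose_spec

theorem dd_eq (k : ℕ) (f g : MvPolynomial ℕ ℤ)
    (h : f - swapPoly k f = (X k - X (k + 1)) * g) : dd k f = g := by
  rw [dd_spec] at h
  exact mul_left_cancel₀ (D_ne k) h

theorem swapPoly_dd (k : ℕ) (f : MvPolynomial ℕ ℤ) : swapPoly k (dd k f) = dd k f := by
  have h := dd_spec k f
  have h2 := congrArg (swapPoly k) h
  rw [swapPoly_sub, swapPoly_swapPoly, swapPoly_mul, swapPoly_sub, swapPoly_X_left,
    swapPoly_X_right] at h2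
  apply mul_left_cancel₀ (D_ne k)
  linear_combination h + h2

/-! ### Degree bounds -/

theorem degreeOf_swapPoly (k l : ℕ) (f : MvPolynomial ℕ ℤ) :
    degreeOf l (swapPoly k f) = degreeOf (Equiv.swap k (k + 1) l) f := by
  have := degreeOf_rename_of_injective (p := f) (Equiv.swap k (k + 1)).injective
    (Equiv.swap k (k + 1) l)
  simpa [swapPoly] using this

theorem degreeOf_D_left (k : ℕ) : 1 ≤ degreeOf k (X k - X (k + 1) : MvPolynomial ℕ ℤ) := by
  have h : degreeOf k ((X k - X (k + 1)) + X (k + 1) : MvPolynomial ℕ ℤ)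
    ≤ max _ _ := degreeOf_add_le k (X k - X (k + 1)) (X (k + 1))
  rw [sub_add_cancel, degreeOf_X_self, degreeOf_X_of_ne (by omega)] at h
  simpa using h

theorem degreeOf_D_right (k : ℕ) :
    1 ≤ degreeOf (k + 1) (X k - X (k + 1) : MvPolynomial ℕ ℤ) := by
  have h : degreeOf (k + 1) (X k - (X k - X (k + 1)) : MvPolynomial ℕ ℤ)
    ≤ max _ _ := degreeOf_sub_le (k + 1) (X k) (X k - X (k + 1))
  rw [sub_sub_cancel, degreeOf_X_self, degreeOf_X_of_ne (by omega)] at h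
  simpa using h

def Stair (n : ℕ) (f : MvPolynomial ℕ ℤ) : Prop := ∀ l, degreeOf l f ≤ n - 1 - l

theorem Stair.dd {n : ℕ} {f : MvPolynomial ℕ ℤ} (hf : Stair n f) (k : ℕ) (hk : k + 1 < n) :
    Stair n (dd k f) := by
  intro l
  by_cases h0 : _root_.dd k f = 0
  · simp [h0]
  have h1 := degreeOf_mul_eq (n := l) (D_ne k) h0
  rw [← dd_spec] at h1
  have h2 := degreeOf_sub_le l f (swapPoly k f)
  rw [degreeOf_swapPoly] at h2
  have h3 := hf l
  have h4 := hf (Equiv.swap k (k + 1) l)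
  by_cases hl : l = k
  · subst hl
    have := degreeOf_D_left l
    rw [Equiv.swap_apply_left] at h2 h4
    have := le_max_iff.mp h2
    omega
  by_cases hl' : l = k + 1
  · subst hl'
    have := degreeOf_D_right k
    rw [Equiv.swap_apply_right] at h2 h4
    have := le_max_iff.mp h2
    omega
  · rw [Equiv.swap_apply_of_ne_of_ne hl hl'] at h2 h4
    have := le_max_iff.mp h2
    omega

theorem stair_top (n : ℕ) :
    Stair n (∏ i ∈ Finset.range n, X i ^ (n - 1 - i) : MvPolynomial ℕ ℤ) := by
  intro l
  refine (degreeOf_prod_le _ _ _).trans ?_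
  have : ∀ i ∈ Finset.range n, degreeOf l (X i ^ (n - 1 - i) : MvPolynomial ℕ ℤ)
      ≤ if i = l then n - 1 - l else 0 := by
    intro i _
    split_ifs with h
    · subst h; rw [degreeOf_X_self_pow]
    · rw [degreeOf_X_pow_of_ne _ (fun h' => h h'.symm)]
  refine (Finset.sum_le_sum this).trans ?_
  rw [Finset.sum_ite_eq']
  split_ifs <;> simp

/-! ### Scaling -/

noncomputable def scl : MvPolynomial ℕ ℤ →ₐ[ℤ] MvPolynomial ℕ ℤ := aeval (fun k => 2 * X k)

theorem scl_X (k : ℕ) : scl (X k) = 2 * X k := by simp [scl]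

theorem scl_swapPoly (k : ℕ) (f : MvPolynomial ℕ ℤ) :
    scl (swapPoly k f) = swapPoly k (scl f) := by
  have : scl.comp (rename (Equiv.swap k (k + 1)))
      = (rename (Equiv.swap k (k + 1)) : MvPolynomial ℕ ℤ →ₐ[ℤ] MvPolynomial ℕ ℤ).comp scl := by
    apply MvPolynomial.algHom_ext
    intro l
    have ht : (rename (Equiv.swap k (k + 1)) : MvPolynomial ℕ ℤ →ₐ[ℤ] MvPolynomial ℕ ℤ) 2 = 2 :=
      map_ofNat _ 2
    simp [scl, ht]
  exact DFunLike.congr_fun this f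

def Sc (f : MvPolynomial ℕ ℤ) : Prop := ∃ a b : ℕ, 2 ^ a * scl f = 2 ^ b * f

theorem Sc.dd {f : MvPolynomial ℕ ℤ} (hf : Sc f) (k : ℕ) : Sc (dd k f) := by
  obtain ⟨a, b, h⟩ := hf
  refine ⟨a + 1, b, ?_⟩
  have h1 := dd_spec k f
  have h2 := congrArg scl h1
  have h3 := congrArg (swapPoly k) h
  rw [map_sub, map_mul, map_sub, scl_X, scl_X, scl_swapPoly] at h2
  rw [swapPoly_mul, swapPoly_mul, swapPoly_pow, swapPoly_pow, swapPoly_two] at h3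
  apply mul_left_cancel₀ (D_ne k)
  linear_combination (2 : MvPolynomial ℕ ℤ) ^ b * h1 - 2 ^ a * h2 + h - h3

theorem sc_top (n : ℕ) : Sc (∏ i ∈ Finset.range n, X i ^ (n - 1 - i)) := by
  refine ⟨0, ∑ i ∈ Finset.range n, (n - 1 - i), ?_⟩
  rw [map_prod, ← Finset.prod_pow_eq_pow_sum, ← Finset.prod_mul_distrib]
  simp [scl_X, mul_pow]

/-! ### Permutations -/

theorem sFin_val (n k : ℕ) (hk : k + 1 < n) (x : Fin n) :
    (sFin n k x).val = if x.val = k then k + 1 else if x.val = k + 1 then k else x.val := by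
  unfold sFin
  rw [dif_pos hk, Equiv.swap_apply_def]
  simp only [Fin.ext_iff]
  split_ifs <;> simp_all

theorem sFin_mul_self (n k : ℕ) : sFin n k * sFin n k = 1 := by
  unfold sFin; split_ifs <;> simp

theorem sFin_left (n k : ℕ) (hk : k + 1 < n) : sFin n k ⟨k, by omega⟩ = ⟨k + 1, hk⟩ := by
  simp [sFin, hk]

theorem sFin_right (n k : ℕ) (hk : k + 1 < n) : sFin n k ⟨k + 1, hk⟩ = ⟨k, by omega⟩ := by
  simp [sFin, hk]

theorem sFin_sFin (n k : ℕ) (x : Fin n) : sFin n k (sFin n k x) = x := by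
  rw [← Equiv.Perm.mul_apply, sFin_mul_self]; rfl

theorem lenF_lt (n k : ℕ) (hk : k + 1 < n) (σ : Equiv.Perm (Fin n))
    (h : σ ⟨k, by omega⟩ < σ ⟨k + 1, hk⟩) : lenF n σ < lenF n (σ * sFin n k) := by
  unfold lenF
  rw [← Finset.card_map ((Equiv.prodCongr (sFin n k) (sFin n k)).toEmbedding)]
  apply Finset.card_lt_card
  rw [Finset.ssubset_iff_of_subset]
  · refine ⟨(⟨k, by omega⟩, ⟨k + 1, hk⟩), ?_, ?_⟩
    · refine Finset.mem_filter.mpr ⟨Finset.mem_univ _, by simp, ?_⟩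
      simp only [Equiv.Perm.mul_apply, sFin_left n k hk, sFin_right n k hk]
      exact h
    · simp only [Finset.mem_map, Finset.mem_filter, Finset.mem_univ, true_and, not_exists, not_and]
      rintro ⟨p, q⟩ ⟨h1, h2⟩ h3
      simp only [Equiv.coe_toEmbedding, Equiv.prodCongr_apply, Prod.map_apply,
        Prod.mk.injEq] at h3
      have e1 := congrArg (sFin n k) h3.1
      have e2 := congrArg (sFin n k) h3.2
      rw [sFin_sFin, sFin_left n k hk] at e1
      rw [sFin_sFin, sFin_right n k hk] at e2
      subst e1 e2
      simp at h1
  · intro x hx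
    simp only [Finset.mem_map, Finset.mem_filter, Finset.mem_univ, true_and] at hx
    obtain ⟨⟨p, q⟩, ⟨h1, h2⟩, rfl⟩ := hx
    refine Finset.mem_filter.mpr ⟨Finset.mem_univ _, ?_⟩
    simp only [Equiv.coe_toEmbedding, Equiv.prodCongr_apply, Prod.map_apply,
      Equiv.Perm.mul_apply, sFin_sFin]
    refine ⟨?_, h2⟩
    have hne : ¬ (p.val = k ∧ q.val = k + 1) := by
      rintro ⟨a, b⟩
      have a' : p = ⟨k, by omega⟩ := Fin.ext a
      have b' : q = ⟨k + 1, hk⟩ := Fin.ext b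
      rw [← a', ← b'] at h
      exact absurd h (not_lt.mpr h2.le)
    simp only [Fin.lt_def, sFin_val n k hk] at h1 ⊢
    split_ifs <;> omega

theorem eq_rev_of_desc (n : ℕ) (σ : Equiv.Perm (Fin n))
    (h : ∀ k (hk : k + 1 < n), σ ⟨k + 1, hk⟩ < σ ⟨k, by omega⟩) : σ = Fin.revPerm := by
  cases n with
  | zero => exact Subsingleton.elim _ _
  | succ m =>
    have hm : StrictMono (fun x => Fin.rev (σ x)) := by
      rw [Fin.strictMono_iff_lt_succ]
      intro i
      rw [Fin.rev_lt_rev]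
      exact h i.val (by omega)
    have : (fun x => Fin.rev (σ x)) = id := by
      have hb : Function.Surjective (fun x => Fin.rev (σ x)) :=
        Fin.rev_surjective.comp σ.surjective
      have : StrictMono.orderIsoOfSurjective _ hm hb = OrderIso.refl _ := Subsingleton.elim _ _
      funext x
      exact DFunLike.congr_fun this x
    ext x
    have := congrFun this x
    simp only [id] at this
    rw [Fin.revPerm_apply, ← this, Fin.rev_rev]
    simp [this]

/-! ### Consequences of the Schubert recursion -/

section
variable {n : ℕ} {S : Equiv.Perm (Fin n) → MvPolynomial ℕ ℤ}

theorem lenF_le (n : ℕ) (σ : Equiv.Perm (Fin n)) :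
    lenF n σ ≤ Fintype.card (Fin n × Fin n) := Finset.card_le_univ _

theorem S_props (hS : SchubertProp n S) (m : ℕ) : ∀ σ : Equiv.Perm (Fin n),
    Fintype.card (Fin n × Fin n) - lenF n σ = m → Stair n (S σ) ∧ Sc (S σ) := by
  induction m using Nat.strong_induction_on with
  | _ m ih =>
    intro σ hm
    by_cases h : ∀ k (hk : k + 1 < n), σ ⟨k + 1, hk⟩ < σ ⟨k, by omega⟩
    · rw [eq_rev_of_desc n σ h, hS.1]
      exact ⟨stair_top n, sc_top n⟩
    · push Not at h
      obtain ⟨k, hk, h⟩ := h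
      have hlt := lenF_lt n k hk σ (lt_of_le_of_ne h (by
        intro h; have := σ.injective h; simp at this))
      have hb := lenF_le n (σ * sFin n k)
      obtain ⟨h1, h2⟩ := ih (Fintype.card (Fin n × Fin n) - lenF n (σ * sFin n k)) (by omega)
        (σ * sFin n k) rfl
      rw [hS.2 σ k hk hlt]
      exact ⟨h1.dd k hk, h2.dd k⟩

theorem S_asc (hS : SchubertProp n S) (σ : Equiv.Perm (Fin n)) (k : ℕ) (hk : k + 1 < n)
    (h : σ ⟨k, by omega⟩ < σ ⟨k + 1, hk⟩) : S σ - swapPoly k (S σ) = 0 := by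
  rw [hS.2 σ k hk (lenF_lt n k hk σ h), swapPoly_dd, sub_self]

theorem S_desc (hS : SchubertProp n S) (σ : Equiv.Perm (Fin n)) (k : ℕ) (hk : k + 1 < n)
    (h : σ ⟨k + 1, hk⟩ < σ ⟨k, by omega⟩) :
    S σ - swapPoly k (S σ) = (X k - X (k + 1)) * S (σ * sFin n k) := by
  have e : σ * sFin n k * sFin n k = σ := by rw [mul_assoc, sFin_mul_self, mul_one]
  have h1 := lenF_lt n k hk (σ * sFin n k) (by
    simpa [Equiv.Perm.mul_apply, sFin_left n k hk, sFin_right n k hk] using h)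
  rw [hS.2 (σ * sFin n k) k hk h1, e, dd_spec]

theorem S_chain (hS : SchubertProp n S) (N j : ℕ) (hN : N ≤ n) (hj : j + 1 ≤ N)
    (σ : Equiv.Perm (Fin n))
    (hσ : ∀ x : Fin n, (σ x).val = if x.val < j then N - 2 - x.val else if x.val = j then N - 1
      else if x.val < N then N - 1 - x.val else x.val)
    (hv : S σ = ∏ k ∈ Finset.range n, X k ^ (if k < j then N - 2 - k else N - 1 - k)) :
    S 1 = 1 := by
  by_cases hjN : j + 1 < N
  · have hjn : j + 1 < n := by omega
    have hd : σ ⟨j + 1, hjn⟩ < σ ⟨j, by omega⟩ := by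
      rw [Fin.lt_def, hσ, hσ]
      simp only
      split_ifs <;> omega
    have hdd := S_desc hS σ j hjn hd
    refine S_chain hS N (j + 1) hN hjN (σ * sFin n j) ?_ ?_
    · intro x
      rw [Equiv.Perm.mul_apply, hσ, sFin_val n j hjn]
      split_ifs <;> omega
    · have hsplit : S σ = X j *
          ∏ k ∈ Finset.range n, X k ^ (if k < j + 1 then N - 2 - k else N - 1 - k) := by
        rw [hv, ← Finset.mul_prod_erase (Finset.range n) _ (Finset.mem_range.mpr (show j < n by omega)),
          ← Finset.mul_prod_erase (Finset.range n)
            (fun k => X k ^ (if k < j + 1 then N - 2 - k else N - 1 - k))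
            (Finset.mem_range.mpr (show j < n by omega)), ← mul_assoc]
        congr 1
        · simp only [lt_self_iff_false, if_false, Nat.lt_succ_self, if_true]
          rw [← pow_succ']
          congr 1
          omega
        · apply Finset.prod_congr rfl
          intro k hk
          have := Finset.ne_of_mem_erase hk
          congr 1
          split_ifs <;> omega
      have hsym : swapPoly j (∏ k ∈ Finset.range n,
            X k ^ (if k < j + 1 then N - 2 - k else N - 1 - k))
          = ∏ k ∈ Finset.range n, X k ^ (if k < j + 1 then N - 2 - k else N - 1 - k) := by
        unfold swapPoly
        rw [map_prod]
        simp only [map_pow, rename_X]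
        apply Finset.prod_bij (fun k _ => Equiv.swap j (j + 1) k)
        · intro k hk
          rw [Finset.mem_range] at hk ⊢
          rw [Equiv.swap_apply_def]
          split_ifs <;> omega
        · intro a _ b _ h
          exact (Equiv.swap j (j + 1)).injective h
        · intro b hb
          refine ⟨Equiv.swap j (j + 1) b, ?_, by simp⟩
          rw [Finset.mem_range] at hb ⊢
          rw [Equiv.swap_apply_def]
          split_ifs <;> omega
        · intro k hk
          congr 1
          rw [Equiv.swap_apply_def]
          split_ifs <;> omega
      generalize (∏ k ∈ Finset.range n, X k ^ (if k < j + 1 then N - 2 - k else N - 1 - k) :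
        MvPolynomial ℕ ℤ) = g at hsplit hsym
      rw [hsplit, swapPoly_mul, hsym, swapPoly_X_left] at hdd
      apply mul_left_cancel₀ (D_ne j)
      linear_combination -hdd
  · have hjN : N = j + 1 := by omega
    by_cases hj0 : j = 0
    · subst hj0
      have : σ = 1 := by
        ext x
        rw [hσ]
        simp only [Equiv.Perm.one_apply]
        split_ifs <;> omega
      rw [← this, hv]
      apply Finset.prod_eq_one
      intro k _
      have : (if k < 0 then N - 2 - k else N - 1 - k) = 0 := by split_ifs <;> omega
      rw [this, pow_zero]
    · refine S_chain hS (N - 1) 0 (by omega) (by omega) σ ?_ ?_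
      · intro x
        rw [hσ]
        split_ifs <;> omega
      · rw [hv]
        apply Finset.prod_congr rfl
        intro k _
        congr 1
        split_ifs <;> omega
termination_by (N, N - j)

theorem S_one (hS : SchubertProp n S) (hn : 0 < n) : S 1 = 1 := by
  refine S_chain hS n 0 le_rfl (by omega) Fin.revPerm ?_ ?_
  · intro x
    rw [Fin.revPerm_apply, Fin.val_rev]
    split_ifs <;> omega
  · rw [hS.1]
    simp

/-! ### Uniqueness -/

theorem eq_C_of_sym (f : MvPolynomial ℕ ℤ) (hs : ∀ l, n ≤ l + 1 → degreeOf l f = 0)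
    (hsw : ∀ k, k + 1 < n → swapPoly k f = f) : f = C (constantCoeff f) := by
  have key : ∀ m l, n ≤ l + 1 + m → degreeOf l f = 0 := by
    intro m
    induction m with
    | zero => intro l hl; exact hs l (by omega)
    | succ m ih =>
      intro l hl
      by_cases h : n ≤ l + 1
      · exact hs l h
      · rw [← hsw l (by omega), degreeOf_swapPoly, Equiv.swap_apply_left]
        exact ih (l + 1) (by omega)
  have h0 : f.totalDegree = 0 := by
    rw [totalDegree_eq_zero_iff]
    intro m hm x
    have h1 := monomial_le_degreeOf x hm
    rw [key n x (by omega)] at h1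
    omega
  exact totalDegree_eq_zero_iff_eq_C.mp h0

theorem S_unique (hS : SchubertProp n S) (σ : Equiv.Perm (Fin n)) (c : MvPolynomial ℕ ℤ) (d : ℕ)
    (hd : 0 < d) (hc : scl c = 2 ^ d * c) (hc0 : constantCoeff c = 0)
    (hdeg : c ∈ supported ℤ {l | l + 1 < n})
    (hsw : ∀ k, k + 1 < n → S σ - swapPoly k (S σ) = c - swapPoly k c)
    (hns : ∃ k, k + 1 < n ∧ S σ - swapPoly k (S σ) ≠ 0) : S σ = c := by
  obtain ⟨h1, h2⟩ := S_props hS _ σ rfl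
  have hC := eq_C_of_sym (n := n) (S σ - c) (by
    intro l hl
    have a := degreeOf_sub_le l (S σ) c
    have b := h1 l
    have e : degreeOf l c = 0 := by
      rw [mem_supported] at hdeg
      by_contra hne
      have : l ∈ c.vars := by
        rw [vars_def, Multiset.mem_toFinset, ← Multiset.count_pos, ← degreeOf_def]
        omega
      have := hdeg this
      simp at this
      omega
    rw [e] at a
    have := le_max_iff.mp a
    omega) (by
    intro k hk
    rw [swapPoly_sub]
    linear_combination -hsw k hk)
  generalize constantCoeff (S σ - c) = a at hC
  have hf : S σ = c + C a := by rw [← hC]; ring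
  by_cases ha : a = 0
  · rw [hf, ha]; simp
  exfalso
  obtain ⟨A, B, h⟩ := h2
  have hsa : scl (C a) = C a := by simp [scl]
  rw [hf, map_add, hc, hsa] at h
  have h' := congrArg constantCoeff h
  simp only [map_mul, map_add, map_pow, hc0, constantCoeff_C, mul_zero, zero_add] at h'
  have h'' := mul_right_cancel₀ ha h'
  have ht : constantCoeff (2 : MvPolynomial ℕ ℤ) = 2 := map_ofNat _ 2
  rw [ht] at h''
  have hAB : A = B := by
    have : (2 : ℕ) ^ A = 2 ^ B := by exact_mod_cast h''
    exact Nat.pow_right_injective le_rfl this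
  subst hAB
  have h3 := mul_left_cancel₀ (pow_ne_zero A two_ne_zero) h
  have h4 : ((2 : MvPolynomial ℕ ℤ) ^ d - 1) * c = 0 := by linear_combination h3
  have h5 : ((2 : MvPolynomial ℕ ℤ) ^ d - 1) ≠ 0 := by
    intro h
    have := congrArg constantCoeff h
    simp only [map_sub, map_pow, ht, map_one, map_zero] at this
    have h6 : (2 : ℤ) ^ d = 2 ^ 0 := by linarith
    have h7 : (2 : ℕ) ^ d = 2 ^ 0 := by exact_mod_cast h6
    have := Nat.pow_right_injective le_rfl h7
    omega
  have hcz : c = 0 := (mul_eq_zero.mp h4).resolve_left h5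
  obtain ⟨k, hk, hn⟩ := hns
  apply hn
  rw [hf, hcz, zero_add, swapPoly_C, sub_self]

/-! ### Linear forms, length one -/

noncomputable def EE (m : ℕ) : MvPolynomial ℕ ℤ := ∑ l ∈ Finset.range (m + 1), X l
noncomputable def PP (m : ℕ) : MvPolynomial ℕ ℤ := ∑ l ∈ Finset.range (m + 1), X l ^ 2

theorem swap_sum_ne (e m k : ℕ) (h : k ≠ m) :
    swapPoly k (∑ l ∈ Finset.range (m + 1), X l ^ e) = ∑ l ∈ Finset.range (m + 1), X l ^ e := by
  unfold swapPoly
  rw [map_sum]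
  simp only [map_pow, rename_X]
  by_cases hk : k < m
  · apply Finset.sum_bij (fun k' _ => Equiv.swap k (k + 1) k')
    · intro k hk
      rw [Finset.mem_range] at hk ⊢
      rw [Equiv.swap_apply_def]
      split_ifs <;> omega
    · intro a _ b _ h
      exact (Equiv.swap _ _).injective h
    · intro b hb
      refine ⟨Equiv.swap k (k + 1) b, ?_, by simp⟩
      rw [Finset.mem_range] at hb ⊢
      rw [Equiv.swap_apply_def]
      split_ifs <;> omega
    · intro k hk
      rfl
  · apply Finset.sum_congr rfl
    intro l hl
    rw [Finset.mem_range] at hl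
    rw [Equiv.swap_apply_of_ne_of_ne (by omega) (by omega)]

theorem swap_sum_eq (e m : ℕ) :
    swapPoly m (∑ l ∈ Finset.range (m + 1), X l ^ e)
      = (∑ l ∈ Finset.range (m + 1), X l ^ e) - X m ^ e + X (m + 1) ^ e := by
  rw [Finset.sum_range_succ, swapPoly_add, swapPoly_pow, swapPoly_X_left, add_sub_cancel_right]
  congr 1
  unfold swapPoly
  rw [map_sum]
  simp only [map_pow, rename_X]
  apply Finset.sum_congr rfl
  intro l hl
  rw [Finset.mem_range] at hl
  rw [Equiv.swap_apply_of_ne_of_ne (by omega) (by omega)]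

theorem swap_EE_ne (m k : ℕ) (h : k ≠ m) : swapPoly k (EE m) = EE m := by
  simpa [EE] using swap_sum_ne 1 m k h
theorem swap_EE_eq (m : ℕ) : swapPoly m (EE m) = EE m - X m + X (m + 1) := by
  simpa [EE] using swap_sum_eq 1 m
theorem swap_PP_ne (m k : ℕ) (h : k ≠ m) : swapPoly k (PP m) = PP m := swap_sum_ne 2 m k h
theorem swap_PP_eq (m : ℕ) : swapPoly m (PP m) = PP m - X m ^ 2 + X (m + 1) ^ 2 :=
  swap_sum_eq 2 m

theorem EE_succ (m : ℕ) : EE (m + 1) = EE m + X (m + 1) := Finset.sum_range_succ _ _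

theorem scl_EE (m : ℕ) : scl (EE m) = 2 * EE m := by
  simp [EE, map_sum, scl_X, Finset.mul_sum]
theorem scl_PP (m : ℕ) : scl (PP m) = 4 * PP m := by
  simp only [PP, map_sum, map_pow, scl_X, Finset.mul_sum]
  exact Finset.sum_congr rfl fun _ _ => by ring

theorem cc_EE (m : ℕ) : constantCoeff (EE m) = 0 := by simp [EE]

theorem X_mem (n l : ℕ) (h : l + 1 < n) :
    (X l : MvPolynomial ℕ ℤ) ∈ supported ℤ {l | l + 1 < n} := by
  rw [X_mem_supported]; exact h

theorem EE_mem (n m : ℕ) (h : m + 1 < n) : EE m ∈ supported ℤ {l | l + 1 < n} := by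
  apply Subalgebra.sum_mem
  intro l hl
  rw [Finset.mem_range] at hl
  exact X_mem n l (by omega)

theorem S_simple (hS : SchubertProp n S) (i : ℕ) (hi : i + 1 < n) : S (sFin n i) = EE i := by
  have hd : S (sFin n i) - swapPoly i (S (sFin n i)) = X i - X (i + 1) := by
    rw [S_desc hS _ i hi, sFin_mul_self, S_one hS (by omega), mul_one]
    rw [Fin.lt_def, sFin_val n i hi, sFin_val n i hi]
    simp
  apply S_unique hS _ _ 1 one_pos
  · rw [scl_EE, pow_one]
  · exact cc_EE i
  · exact EE_mem n i hi
  · intro k hk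
    by_cases h : k = i
    · subst h
      rw [hd, swap_EE_eq]; ring
    · rw [S_asc hS _ k hk, swap_EE_ne _ _ h, sub_self]
      rw [Fin.lt_def, sFin_val n i hi, sFin_val n i hi]
      simp only
      split_ifs <;> omega
  · exact ⟨i, hi, by rw [hd]; exact D_ne i⟩

/-! ### Length two -/

theorem desc_iff (i j k : ℕ) (hi : i + 1 < n) (hj : j + 1 < n) (hk : k + 1 < n) (hij : i ≠ j) :
    (sFin n i * sFin n j) ⟨k + 1, hk⟩ < (sFin n i * sFin n j) ⟨k, by omega⟩ ↔
      k = j ∨ (k = i ∧ i ≠ j + 1 ∧ j ≠ i + 1) := by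
  rw [Fin.lt_def, Equiv.Perm.mul_apply, Equiv.Perm.mul_apply, sFin_val n i hi, sFin_val n i hi,
    sFin_val n j hj, sFin_val n j hj]
  simp only
  split_ifs <;> omega

theorem sFin_inj (i j : ℕ) (hi : i + 1 < n) (hj : j + 1 < n) (h : sFin n i = sFin n j) :
    i = j := by
  have h1 := congrArg Fin.val (DFunLike.congr_fun h ⟨i, by omega⟩)
  rw [sFin_val n i hi, sFin_val n j hj] at h1
  simp only at h1
  split_ifs at h1 <;> omega

theorem sFin_comm (i j : ℕ) (hi : i + 1 < n) (hj : j + 1 < n) (h1 : i ≠ j + 1)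
    (h2 : j ≠ i + 1) : sFin n i * sFin n j = sFin n j * sFin n i := by
  ext x
  rw [Equiv.Perm.mul_apply, Equiv.Perm.mul_apply, sFin_val n i hi, sFin_val n j hj,
    sFin_val n j hj, sFin_val n i hi]
  split_ifs <;> omega

theorem word_iff (i j a b : ℕ) (hi : i + 1 < n) (hj : j + 1 < n) (ha : a + 1 < n)
    (hb : b + 1 < n) (hij : i ≠ j) :
    sFin n a * sFin n b = sFin n i * sFin n j ↔
      (a = i ∧ b = j) ∨ (a = j ∧ b = i ∧ i ≠ j + 1 ∧ j ≠ i + 1) := by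
  constructor
  · intro h
    have hab : a ≠ b := by
      rintro rfl
      rw [sFin_mul_self] at h
      apply hij
      apply sFin_inj i j hi hj
      have := congrArg (· * sFin n j) h
      simp only [one_mul, mul_assoc, sFin_mul_self, mul_one] at this
      exact this.symm
    have hd := (desc_iff a b b ha hb hb hab).mpr (Or.inl rfl)
    rw [h, desc_iff i j b hi hj hb hij] at hd
    rcases hd with rfl | ⟨rfl, h1, h2⟩
    · left
      exact ⟨sFin_inj a i ha hi (mul_right_cancel h), rfl⟩
    · right
      rw [sFin_comm b j hi hj h1 h2] at h
      exact ⟨sFin_inj a j ha hj (mul_right_cancel h), rfl, h1, h2⟩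
  · rintro (⟨rfl, rfl⟩ | ⟨rfl, rfl, h1, h2⟩)
    · rfl
    · exact sFin_comm _ _ hj hi h2 h1

/-- pairs `(r₁, r₂)` compatible with the word `(a, b)` -/
def RR (a b : ℕ) : Finset (ℕ × ℕ) :=
  (Finset.range (a + 1) ×ˢ Finset.range (b + 1)).filter
    fun r => r.1 ≤ r.2 ∧ (a < b → r.1 < r.2)

noncomputable def WW (a b : ℕ) : MvPolynomial ℕ ℤ := ∑ r ∈ RR a b, X r.1 * X r.2

theorem mem_RR (a b : ℕ) (r : ℕ × ℕ) :
    r ∈ RR a b ↔ r.1 ≤ r.2 ∧ r.1 ≤ a ∧ r.2 ≤ b ∧ (a < b → r.1 < r.2) := by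
  unfold RR
  rw [Finset.mem_filter, Finset.mem_product, Finset.mem_range, Finset.mem_range]
  omega

theorem finsum_far (i j : ℕ) (hi : i + 1 < n) (hj : j + 1 < n) (hij : i ≠ j) (h1 : i ≠ j + 1)
    (h2 : j ≠ i + 1) :
    ∑ᶠ (p : (ℕ × ℕ) × ℕ × ℕ) (_ : CompatPair n (sFin n i * sFin n j) p),
      (X p.2.1 * X p.2.2 : MvPolynomial ℕ ℤ) = WW i j + WW j i := by
  have hset : ∀ p : (ℕ × ℕ) × ℕ × ℕ, CompatPair n (sFin n i * sFin n j) p ↔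
      p ∈ ({(i, j)} ×ˢ RR i j ∪ {(j, i)} ×ˢ RR j i : Finset ((ℕ × ℕ) × ℕ × ℕ)) := by
    rintro ⟨⟨a, b⟩, r⟩
    simp only [CompatPair, Finset.mem_union, Finset.mem_product, Finset.mem_singleton,
      Prod.mk.injEq, mem_RR]
    constructor
    · rintro ⟨ha, hb, hw, h⟩
      rcases (word_iff i j a b hi hj ha hb hij).mp hw with ⟨rfl, rfl⟩ | ⟨rfl, rfl, _⟩
      · exact Or.inl ⟨⟨rfl, rfl⟩, h⟩
      · exact Or.inr ⟨⟨rfl, rfl⟩, h⟩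
    · rintro (⟨⟨rfl, rfl⟩, h⟩ | ⟨⟨rfl, rfl⟩, h⟩)
      · exact ⟨hi, hj, rfl, h⟩
      · exact ⟨hj, hi, sFin_comm _ _ hj hi h2 h1, h⟩
  simp only [hset]
  rw [finsum_mem_finset_eq_sum, Finset.sum_union, Finset.sum_product, Finset.sum_product]
  · simp [WW]
  · rw [Finset.disjoint_left]
    rintro ⟨⟨a, b⟩, r⟩ ha hb
    simp only [Finset.mem_product, Finset.mem_singleton, Prod.mk.injEq] at ha hb
    omega

theorem finsum_near (i j : ℕ) (hi : i + 1 < n) (hj : j + 1 < n) (hij : i ≠ j)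
    (h : i = j + 1 ∨ j = i + 1) :
    ∑ᶠ (p : (ℕ × ℕ) × ℕ × ℕ) (_ : CompatPair n (sFin n i * sFin n j) p),
      (X p.2.1 * X p.2.2 : MvPolynomial ℕ ℤ) = WW i j := by
  have hset : ∀ p : (ℕ × ℕ) × ℕ × ℕ, CompatPair n (sFin n i * sFin n j) p ↔
      p ∈ ({(i, j)} ×ˢ RR i j : Finset ((ℕ × ℕ) × ℕ × ℕ)) := by
    rintro ⟨⟨a, b⟩, r⟩
    simp only [CompatPair, Finset.mem_product, Finset.mem_singleton,
      Prod.mk.injEq, mem_RR]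
    constructor
    · rintro ⟨ha, hb, hw, h'⟩
      rcases (word_iff i j a b hi hj ha hb hij).mp hw with ⟨rfl, rfl⟩ | ⟨rfl, rfl, _⟩
      · exact ⟨⟨rfl, rfl⟩, h'⟩
      · omega
    · rintro ⟨⟨rfl, rfl⟩, h⟩
      exact ⟨hi, hj, rfl, h⟩
  simp only [hset]
  rw [finsum_mem_finset_eq_sum, Finset.sum_product]
  simp [WW]

theorem WW_far (i j : ℕ) (hij : i < j) : WW i j + WW j i = EE i * EE j := by
  have e : EE i * EE j = ∑ r ∈ Finset.range (i + 1) ×ˢ Finset.range (j + 1), X r.1 * X r.2 := by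
    rw [EE, EE, Finset.sum_mul_sum, Finset.sum_product]
  rw [e, ← Finset.sum_filter_add_sum_filter_not _ (fun r : ℕ × ℕ => r.1 < r.2)]
  congr 1
  · apply Finset.sum_congr _ (fun _ _ => rfl)
    ext r
    rw [mem_RR, Finset.mem_filter, Finset.mem_product, Finset.mem_range, Finset.mem_range]
    omega
  · apply Finset.sum_bij (fun r _ => r.swap)
    · intro r
      rw [mem_RR, Finset.mem_filter, Finset.mem_product, Finset.mem_range, Finset.mem_range]
      simp only [Prod.fst_swap, Prod.snd_swap]
      omega
    · intro a _ b _ h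
      exact Prod.swap_injective h
    · intro r
      rw [Finset.mem_filter, Finset.mem_product, Finset.mem_range, Finset.mem_range]
      intro h
      refine ⟨r.swap, ?_, by simp⟩
      rw [mem_RR]
      simp only [Prod.fst_swap, Prod.snd_swap]
      omega
    · intro r _
      simp [mul_comm]

theorem WW_up_succ (i : ℕ) : WW (i + 1) (i + 2) = WW i (i + 1) + EE (i + 1) * X (i + 2) := by
  have : RR (i + 1) (i + 2) = RR i (i + 1) ∪ Finset.range (i + 2) ×ˢ {i + 2} := by
    ext r
    rw [Finset.mem_union, mem_RR, mem_RR, Finset.mem_product, Finset.mem_range,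
      Finset.mem_singleton]
    omega
  unfold WW
  rw [this, Finset.sum_union, Finset.sum_product, EE, Finset.sum_mul]
  · simp
  · rw [Finset.disjoint_left]
    intro r
    rw [mem_RR, Finset.mem_product, Finset.mem_singleton]
    omega

theorem WW_down_succ (j : ℕ) : WW (j + 2) (j + 1) = WW (j + 1) j + EE (j + 1) * X (j + 1) := by
  have : RR (j + 2) (j + 1) = RR (j + 1) j ∪ Finset.range (j + 2) ×ˢ {j + 1} := by
    ext r
    rw [Finset.mem_union, mem_RR, mem_RR, Finset.mem_product, Finset.mem_range,
      Finset.mem_singleton]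
    omega
  unfold WW
  rw [this, Finset.sum_union, Finset.sum_product, EE, Finset.sum_mul]
  · simp
  · rw [Finset.disjoint_left]
    intro r
    rw [mem_RR, Finset.mem_product, Finset.mem_singleton]
    omega

theorem PP_succ (m : ℕ) : PP (m + 1) = PP m + X (m + 1) ^ 2 := Finset.sum_range_succ _ _
theorem EE_zero : EE 0 = X 0 := by simp [EE]
theorem PP_zero : PP 0 = X 0 ^ 2 := by simp [PP]

theorem WW_up (i : ℕ) : 2 * WW i (i + 1) = EE (i + 1) ^ 2 - PP (i + 1) := by
  induction i with
  | zero =>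
    have : RR 0 1 = {(0, 1)} := by decide
    rw [zero_add, WW, this, Finset.sum_singleton, EE_succ 0, PP_succ 0, EE_zero, PP_zero]
    ring
  | succ i ih =>
    rw [WW_up_succ, EE_succ (i + 1), PP_succ (i + 1)]
    linear_combination ih

theorem WW_down (j : ℕ) : 2 * WW (j + 1) j = EE j ^ 2 + PP j := by
  induction j with
  | zero =>
    have : RR 1 0 = {(0, 0)} := by decide
    rw [zero_add, WW, this, Finset.sum_singleton, EE_zero, PP_zero]
    ring
  | succ i ih =>
    rw [WW_down_succ, EE_succ i, PP_succ i]
    linear_combination ih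

theorem scl_WW (a b : ℕ) : scl (WW a b) = 2 ^ 2 * WW a b := by
  simp only [WW, map_sum, map_mul, scl_X, Finset.mul_sum]
  exact Finset.sum_congr rfl fun _ _ => by ring

theorem cc_WW (a b : ℕ) : constantCoeff (WW a b) = 0 := by simp [WW]

theorem WW_mem (n a b : ℕ) (ha : a + 1 < n) (hb : b + 1 < n) :
    WW a b ∈ supported ℤ {l | l + 1 < n} := by
  apply Subalgebra.sum_mem
  intro r hr
  rw [mem_RR] at hr
  exact Subalgebra.mul_mem _ (X_mem n _ (by omega)) (X_mem n _ (by omega))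

theorem EE_ne (m : ℕ) : EE m ≠ 0 := by
  intro h
  have h1 := swap_EE_eq m
  rw [h] at h1
  have : swapPoly m 0 = 0 := by simp [swapPoly]
  rw [this] at h1
  apply D_ne m
  linear_combination h1

theorem S_mul (hS : SchubertProp n S) (i j : ℕ) (hi : i + 1 < n) (hj : j + 1 < n)
    (hij : i ≠ j) : S (sFin n i * sFin n j) - swapPoly j (S (sFin n i * sFin n j))
      = (X j - X (j + 1)) * EE i := by
  rw [S_desc hS _ j hj ((desc_iff i j j hi hj hj hij).mpr (Or.inl rfl)), mul_assoc,
    sFin_mul_self, mul_one, S_simple hS i hi]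

theorem S_mul_asc (hS : SchubertProp n S) (i j k : ℕ) (hi : i + 1 < n) (hj : j + 1 < n)
    (hk : k + 1 < n) (hij : i ≠ j) (h : ¬ (k = j ∨ (k = i ∧ i ≠ j + 1 ∧ j ≠ i + 1))) :
    S (sFin n i * sFin n j) - swapPoly k (S (sFin n i * sFin n j)) = 0 := by
  apply S_asc hS _ k hk
  rw [← desc_iff i j k hi hj hk hij, not_lt] at h
  apply lt_of_le_of_ne h
  intro h
  have := (sFin n i * sFin n j).injective h
  simp at this

theorem two_cancel {f g : MvPolynomial ℕ ℤ} (h : 2 * f = 2 * g) : f = g :=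
  mul_left_cancel₀ two_ne_zero h

theorem S_far (hS : SchubertProp n S) (i j : ℕ) (hi : i + 1 < n) (hj : j + 1 < n)
    (hij : i < j) (h2 : j ≠ i + 1) : S (sFin n i * sFin n j) = WW i j + WW j i := by
  have h1 : i ≠ j + 1 := by omega
  have hc := sFin_comm i j hi hj h1 h2
  apply S_unique hS _ _ 2 two_pos
  · rw [map_add, scl_WW, scl_WW, mul_add]
  · rw [map_add, cc_WW, cc_WW, add_zero]
  · exact Subalgebra.add_mem _ (WW_mem n i j hi hj) (WW_mem n j i hj hi)
  · intro k hk
    rw [WW_far i j hij, swapPoly_mul]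
    by_cases hkj : k = j
    · subst hkj
      rw [S_mul hS i k hi hk (by omega), swap_EE_eq, swap_EE_ne _ _ (by omega)]
      ring
    by_cases hki : k = i
    · subst hki
      rw [hc, S_mul hS j k hj hk (by omega), swap_EE_eq, swap_EE_ne _ _ (by omega)]
      ring
    · rw [S_mul_asc hS i j k hi hj hk (by omega) (by omega), swap_EE_ne _ _ hki,
        swap_EE_ne _ _ hkj, sub_self]
  · exact ⟨j, hj, by
      rw [S_mul hS i j hi hj (by omega)]; exact mul_ne_zero (D_ne j) (EE_ne i)⟩

theorem S_near (hS : SchubertProp n S) (i j : ℕ) (hi : i + 1 < n) (hj : j + 1 < n)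
    (hij : i = j + 1 ∨ j = i + 1) : S (sFin n i * sFin n j) = WW i j := by
  have hne : i ≠ j := by omega
  apply S_unique hS _ _ 2 two_pos
  · rw [scl_WW]
  · rw [cc_WW]
  · exact WW_mem n i j hi hj
  · intro k hk
    apply two_cancel
    have hsw : 2 * (WW i j - swapPoly k (WW i j)) = 2 * WW i j - swapPoly k (2 * WW i j) := by
      rw [swapPoly_mul, swapPoly_two]; ring
    rw [hsw]
    by_cases hkj : k = j
    · subst hkj
      rw [S_mul hS i k hi hk hne]
      rcases hij with rfl | rfl
      · rw [WW_down, swapPoly_add, swapPoly_pow, swap_EE_eq, swap_PP_eq, EE_succ]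
        ring
      · rw [WW_up, swapPoly_sub, swapPoly_pow, swap_EE_eq, swap_PP_eq, EE_succ]
        ring
    · rw [S_mul_asc hS i j k hi hj hk hne (by omega)]
      rcases hij with rfl | rfl
      · rw [WW_down, swapPoly_add, swapPoly_pow, swap_EE_ne _ _ hkj, swap_PP_ne _ _ hkj]
        ring
      · rw [WW_up, swapPoly_sub, swapPoly_pow, swap_EE_ne _ _ hkj, swap_PP_ne _ _ hkj]
        ring
  · exact ⟨j, hj, by
      rw [S_mul hS i j hi hj (by omega)]; exact mul_ne_zero (D_ne j) (EE_ne i)⟩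

end

/-- For `π = s_i s_j` of length 2, the Schubert polynomial `𝔖_π` equals the sum of the
monomials `x_{r₁} x_{r₂}` over all compatible sequences of `π`. -/
theorem schubert_eq_sum_compatible_length_two (n : ℕ)
    (S : Equiv.Perm (Fin n) → MvPolynomial ℕ ℤ) (hS : SchubertProp n S)
    (i j : ℕ) (hi : i + 1 < n) (hj : j + 1 < n) (π : Equiv.Perm (Fin n))
    (hπ : π = sFin n i * sFin n j) (hlen : lenF n π = 2) :
    S π = ∑ᶠ (p : (ℕ × ℕ) × ℕ × ℕ) (_ : CompatPair n π p), X p.2.1 * X p.2.2 := by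
  have hij : i ≠ j := by
    rintro rfl
    rw [hπ, sFin_mul_self] at hlen
    have : lenF n 1 = 0 := by
      unfold lenF
      rw [Finset.card_eq_zero, Finset.filter_eq_empty_iff]
      rintro p _ ⟨h1, h2⟩
      exact absurd h1 (not_lt.mpr h2.le)
    omega
  subst hπ
  by_cases hn : i = j + 1 ∨ j = i + 1
  · rw [S_near hS i j hi hj hn, finsum_near i j hi hj hij hn]
  · have h1 : i ≠ j + 1 := by omega
    have h2 : j ≠ i + 1 := by omega
    rw [finsum_far i j hi hj hij h1 h2]
    rcases Nat.lt_or_gt_of_ne hij with h | h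
    · exact S_far hS i j hi hj h h2
    · rw [sFin_comm i j hi hj h1 h2, add_comm]
      exact S_far hS j i hj hi h h1
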